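/- Fix an integer n ≥ 100 and set ν = 1/n. Let f₀, f₁ be orientation-preserving C¹ diffeomorphisms of S¹ = ℝ/2ℤ such that: on the arc I = [−ν, 1+ν], f₀(x) = (1 − ν/2)·x and f₁(x) = 1 + (1/4 − ν)·(x − 1); on the arc J = [−2/3, −1/3], both f₀ and f₁ have derivative identically equal to 1 + ν and each has exactly one (repelling) fixed point in J, lying at distance at least ν from the endpoints of J; and f_j(x) ≥ x + ν²/2 for all x ∈ [−1/3, −ν] and f_j(x) ≤ x − ν²/2 for all x ∈ [1+ν, 4/3], for j = 0, 1. Let f_t (t ∈ [0,1]) be the isotopy with f_t(x) = (1 − t²)·f₀(x) + t²·f₁(x) (defined via lifts), and let F(b,x) = (h(b), f_{y(b)}(x)) be the associated almost step skew product over the solenoid. Then the open set V = π^{−1}((0, 1/4)) ⊂ B × S¹ is 2^{−n}-invisible for F with respect to the Lebesgue measure on B × S¹. -/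

import Mathlib

open MeasureTheory Set Filter Topology Metric

instance : Fact ((0 : ℝ) < 2) := ⟨by norm_num⟩
instance : Fact ((0 : ℝ) < 1) := ⟨by norm_num⟩

/-- The circle `S¹ = ℝ/2ℤ` (the fiber). -/
abbrev S1 := AddCircle (2 : ℝ)

/-- The base ambient space `(ℝ/ℤ) × ℂ`. -/
abbrev Base := AddCircle (1 : ℝ) × ℂ

/-- The solenoid map `h(y,z) = (2y, e^{2πiy} + λz)` (here `AddCircle.toCircle y = e^{2πiy}`). -/
noncomputable def solenoidMap (lam : ℝ) (b : Base) : Base :=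
  (b.1 + b.1, (AddCircle.toCircle b.1 : ℂ) + lam * b.2)

/-- The solid torus `B = (ℝ/ℤ) × D(R)`. -/
def solidTorus (R : ℝ) : Set Base := univ ×ˢ closedBall (0 : ℂ) R

/-- The representative in `[0,1)` of a point of `ℝ/ℤ`. -/
noncomputable def rep1 (y : AddCircle (1 : ℝ)) : ℝ :=
  ((AddCircle.equivIco (1 : ℝ) 0) y : ℝ)

/-- The family of fiber maps of the almost step skew product:
`f_y = f₀` on `[0, 3/8)`, `f_y = f_{8y−3}` on `[3/8, 1/2)`, `f_y = f₁` on `[1/2, 7/8)`,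
and `f_y = f_{8−8y}` on `[7/8, 1)`. -/
noncomputable def fiberFam (f0 f1 : S1 → S1) (ft : ℝ → S1 → S1) (y : ℝ) : S1 → S1 :=
  if y < 3 / 8 then f0
  else if y < 1 / 2 then ft (8 * y - 3)
  else if y < 7 / 8 then f1
  else ft (8 - 8 * y)

/-- The almost step skew product `F(b,x) = (h(b), f_{y(b)}(x))` over the solenoid. -/
noncomputable def almostStep (lam : ℝ) (f0 f1 : S1 → S1) (ft : ℝ → S1 → S1)
    (p : Base × S1) : Base × S1 :=
  (solenoidMap lam p.1, fiberFam f0 f1 ft (rep1 p.1.1) p.2)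

/-- The forward itinerary of `b`: `ω_k = 0` iff the fractional part of `2^k·y(b)` lies in
`[0, 1/2)` (`false` = 0, `true` = 1). -/
noncomputable def itin (b : Base) (k : ℕ) : Bool :=
  decide ((1 : ℝ) / 2 ≤ rep1 ((2 ^ k : ℕ) • b.1))

/-- A circle map is orientation preserving if it admits a strictly monotone lift
commuting with the deck translation `x ↦ x + 2`. -/
def OrientPreserving (f : S1 → S1) : Prop :=
  ∃ G : ℝ → ℝ, StrictMono G ∧ (∀ x, G (x + 2) = G x + 2) ∧
    ∀ x : ℝ, ((G x : ℝ) : S1) = f ((x : ℝ) : S1)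

/-- The average frequency with which the first `N` points of the orbit of `p` visit `V`. -/
noncomputable def visitFreq {X : Type*} (F : X → X) (V : Set X) (p : X) (N : ℕ) : ℝ :=
  (∑ k ∈ Finset.range N, V.indicator (fun _ => (1 : ℝ)) (F^[k] p)) / N

/-- Running maxima of the Birkhoff sums. -/
noncomputable def runMax {X : Type*} (T : X → X) (g : X → ℝ) : ℕ → X → ℝ
  | 0, _ => 0
  | (n + 1), x => max 0 (g x + runMax T g n (T x))

lemma runMax_nonneg {X : Type*} (T : X → X) (g : X → ℝ) (n : ℕ) (x : X) :
    0 ≤ runMax T g n x := by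
  cases n <;> simp [runMax]

lemma runMax_le {X : Type*} (T : X → X) (g : X → ℝ) (c : ℝ) (hc : 0 ≤ c) (hg : ∀ x, g x ≤ c)
    (n : ℕ) (x : X) : runMax T g n x ≤ n * c := by
  induction n generalizing x with
  | zero => simp [runMax]
  | succ n ih =>
    have h1 := ih (T x)
    have h2 := hg x
    have h3 : 0 ≤ (n : ℝ) * c := by positivity
    simp only [runMax]
    push_cast
    apply max_le <;> linarith

lemma runMax_mono {X : Type*} (T : X → X) (g : X → ℝ) (n : ℕ) (x : X) :
    runMax T g n x ≤ runMax T g (n + 1) x := by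
  induction n generalizing x with
  | zero => simp [runMax]
  | succ n ih =>
    rw [runMax, runMax]
    exact max_le_max le_rfl (by linarith [ih (T x)])

lemma sum_le_runMax {X : Type*} (T : X → X) (g : X → ℝ) (n : ℕ) (x : X) :
    ∑ k ∈ Finset.range n, g (T^[k] x) ≤ runMax T g n x := by
  induction n generalizing x with
  | zero => simp [runMax]
  | succ n ih =>
    rw [Finset.sum_range_succ', runMax]
    have := ih (T x)
    simp only [Function.iterate_succ, Function.comp, Function.iterate_zero, id]
    exact le_max_of_le_right (by linarith)

lemma runMax_measurable {X : Type*} [MeasurableSpace X] {T : X → X} {g : X → ℝ}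
    (hT : Measurable T) (hg : Measurable g) (n : ℕ) : Measurable (runMax T g n) := by
  induction n with
  | zero => exact measurable_const
  | succ n ih => exact measurable_const.max (hg.add (ih.comp hT))

/-- A one-sided pointwise ergodic statement: if the mean of a bounded `g` is negative, then the
Birkhoff sums of `g` are a.e. bounded above. -/
lemma ae_bdd_sums {X : Type*} [MeasurableSpace X] {μ : Measure X} [IsProbabilityMeasure μ]
    {T : X → X} (hT : Ergodic T μ) {g : X → ℝ} (hg : Measurable g) (c : ℝ) (hc : ∀ x, |g x| ≤ c)
    (hneg : ∫ x, g x ∂μ < 0) :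
    ∀ᵐ x ∂μ, ∃ C : ℝ, ∀ n : ℕ, ∑ k ∈ Finset.range n, g (T^[k] x) ≤ C := by
  have hTm : Measurable T := hT.measurable
  have hMm := runMax_measurable hTm hg
  set M := runMax T g with hM
  let A : Set X := {x | ∀ C : ℕ, ∃ n : ℕ, (C : ℝ) < M n x}
  have hAm : MeasurableSet A := by
    have : A = ⋂ C : ℕ, ⋃ n : ℕ, {x | (C : ℝ) < M n x} := by
      ext x; simp [A]
    rw [this]
    exact MeasurableSet.iInter fun C => MeasurableSet.iUnion fun n =>
      measurableSet_lt measurable_const (hMm n)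
  have hinv : T ⁻¹' A = A := by
    ext x
    simp only [mem_preimage, A, mem_ofPred_eq]
    have hcx := abs_le.1 (hc x)
    constructor
    · intro h C
      obtain ⟨D, hD⟩ := exists_nat_gt (C + c)
      obtain ⟨n, hn⟩ := h D
      refine ⟨n + 1, ?_⟩
      have : M (n+1) x = max 0 (g x + M n (T x)) := rfl
      rw [this]
      exact lt_max_of_lt_right (by linarith)
    · intro h C
      obtain ⟨D, hD⟩ := exists_nat_gt (C + c)
      obtain ⟨n, hn⟩ := h D
      have hc0 : 0 ≤ c := (abs_nonneg _).trans (hc x)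
      have hC0 : (0:ℝ) ≤ C := Nat.cast_nonneg _
      cases n with
      | zero =>
        have : M 0 x = 0 := rfl
        rw [this] at hn
        linarith
      | succ n =>
        refine ⟨n, ?_⟩
        have : M (n+1) x = max 0 (g x + M n (T x)) := rfl
        rw [this] at hn
        rcases lt_max_iff.1 hn with h0 | h0 <;> linarith
  have hAc : ∀ x, x ∉ A → ∃ C : ℝ, ∀ n : ℕ, ∑ k ∈ Finset.range n, g (T^[k] x) ≤ C := by
    intro x hx
    simp only [A, mem_ofPred_eq, not_forall, not_exists, not_lt] at hx
    obtain ⟨C, hC⟩ := hx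
    exact ⟨C, fun n => (sum_le_runMax T g n x).trans (hC n)⟩
  rcases hT.toPreErgodic.ae_empty_or_univ hAm hinv with h | h
  · have : ∀ᵐ x ∂μ, x ∉ A := by
      have h' := ae_eq_empty.1 h
      exact measure_eq_zero_iff_ae_notMem.1 h'
    filter_upwards [this] with x hx using hAc x hx
  · exfalso
    have hA : ∀ᵐ x ∂μ, x ∈ A := by
      filter_upwards [h] with x hx
      have : (x ∈ A) = (x ∈ univ) := hx
      rw [this]; trivial
    have hintM : ∀ n, Integrable (M n) μ := by
      intro n
      refine Integrable.of_bound (hMm n).aestronglyMeasurable (n * |c|) (Eventually.of_forall ?_)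
      intro x
      rw [Real.norm_eq_abs, abs_of_nonneg (runMax_nonneg T g n x)]
      exact runMax_le T g _ (abs_nonneg c)
        (fun x => ((le_abs_self _).trans (hc x)).trans (le_abs_self _)) n x
    have hintMT : ∀ n, Integrable (fun x => M n (T x)) μ := fun n =>
      hT.toMeasurePreserving.integrable_comp_of_integrable (hintM n)
    have hpos : ∀ n, 0 ≤ ∫ x, (M (n+1) x - M n (T x)) ∂μ := by
      intro n
      rw [integral_sub (hintM _) (hintMT n)]
      have : ∫ x, M n (T x) ∂μ = ∫ x, M n x ∂μ := by
        have h1 := integral_map (μ := μ) hTm.aemeasurable (f := M n)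
          (hMm n).aestronglyMeasurable
        rw [hT.toMeasurePreserving.map_eq] at h1
        exact h1.symm
      rw [this, sub_nonneg]
      exact integral_mono (hintM _) (hintM _) (fun x => runMax_mono T g n x)
    have hlim : Tendsto (fun n => ∫ x, (M (n+1) x - M n (T x)) ∂μ) atTop (𝓝 (∫ x, g x ∂μ)) := by
      refine tendsto_integral_of_dominated_convergence (fun _ => c)
        (fun n => ((hMm _).sub ((hMm n).comp hTm)).aestronglyMeasurable)
        (integrable_const c) ?_ ?_
      · intro n
        refine Eventually.of_forall fun x => ?_
        have h1 : M (n+1) x = max 0 (g x + M n (T x)) := rfl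
        have h2 : 0 ≤ M n (T x) := runMax_nonneg T g n (T x)
        have h3 := abs_le.1 (hc x)
        rw [h1, Real.norm_eq_abs, abs_le]
        have hc0 : 0 ≤ c := (abs_nonneg _).trans (hc x)
        constructor
        · have := le_max_right 0 (g x + M n (T x))
          linarith
        · have : max 0 (g x + M n (T x)) ≤ c + M n (T x) := max_le (by linarith) (by linarith)
          linarith
      · filter_upwards [hA] with x hx
        apply tendsto_const_nhds.congr'
        rw [← hinv] at hx
        obtain ⟨D, hD⟩ := exists_nat_gt c
        obtain ⟨n0, hn0⟩ := hx D
        filter_upwards [eventually_ge_atTop n0] with n hn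
        have h1 : M (n+1) x = max 0 (g x + M n (T x)) := rfl
        have hmono : M n0 (T x) ≤ M n (T x) :=
          monotone_nat_of_le_succ (f := fun n => M n (T x)) (fun n => runMax_mono T g n (T x)) hn
        have h3 := abs_le.1 (hc x)
        rw [h1, max_eq_right (by linarith)]
        ring
    have := ge_of_tendsto' hlim hpos
    linarith

lemma ae_visit_bound {X : Type*} [MeasurableSpace X] {μ : Measure X} [IsProbabilityMeasure μ]
    {T : X → X} (hT : Ergodic T μ) {E : Set X} (hE : MeasurableSet E) (α : ℝ)
    (hα : μ.real E < α) :
    ∀ᵐ x ∂μ, ∃ C : ℝ, ∀ n : ℕ,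
      ∑ k ∈ Finset.range n, E.indicator (fun _ => (1:ℝ)) (T^[k] x) ≤ α * n + C := by
  have hm : Measurable (E.indicator (fun _ => (1:ℝ))) := measurable_const.indicator hE
  have hi : Integrable (E.indicator (fun _ => (1:ℝ))) μ := (integrable_const 1).indicator hE
  have := ae_bdd_sums hT (g := fun x => E.indicator (fun _ => (1:ℝ)) x - α)
    (hm.sub measurable_const) (1 + |α|) (by
      intro x
      refine (abs_sub _ _).trans ?_
      have : |E.indicator (fun _ => (1:ℝ)) x| ≤ 1 := by
        by_cases h : x ∈ E <;> simp [h]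
      linarith) (by
      rw [integral_sub hi (integrable_const _), integral_indicator hE]
      simp
      linarith)
  filter_upwards [this] with x ⟨C, hC⟩
  refine ⟨C, fun n => ?_⟩
  have := hC n
  rw [Finset.sum_sub_distrib] at this
  simp at this
  simp
  linarith

lemma rep1_coe (x : ℝ) : rep1 (x : AddCircle (1:ℝ)) = Int.fract x := by
  unfold rep1
  rw [AddCircle.coe_equivIco_mk_apply]
  simp

lemma coe_rep1 (y : AddCircle (1:ℝ)) : ((rep1 y : ℝ) : AddCircle (1:ℝ)) = y :=
  (AddCircle.equivIco (1 : ℝ) 0).symm_apply_apply y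

lemma rep1_nonneg (y : AddCircle (1:ℝ)) : 0 ≤ rep1 y :=
  ((AddCircle.equivIco (1 : ℝ) 0) y).2.1

lemma rep1_lt (y : AddCircle (1:ℝ)) : rep1 y < 1 := by
  have := ((AddCircle.equivIco (1 : ℝ) 0) y).2.2
  simpa [rep1] using this

lemma rep1_measurable : Measurable rep1 :=
  measurable_subtype_coe.comp (AddCircle.measurableEquivIco (1:ℝ) 0).measurable

lemma rep1_double_low (y : AddCircle (1:ℝ)) (h : rep1 y < 1/2) :
    rep1 ((2:ℕ) • y) = 2 * rep1 y := by
  have h0 := rep1_nonneg y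
  conv_lhs => rw [← coe_rep1 y, ← AddCircle.coe_nsmul, rep1_coe]
  rw [Int.fract_eq_self.2]
  · simp
  · simp; constructor <;> linarith

lemma rep1_double_high (y : AddCircle (1:ℝ)) (h : 1/2 ≤ rep1 y) :
    rep1 ((2:ℕ) • y) = 2 * rep1 y - 1 := by
  have h0 := rep1_lt y
  conv_lhs => rw [← coe_rep1 y, ← AddCircle.coe_nsmul, rep1_coe]
  rw [Int.fract_eq_iff]
  refine ⟨by linarith, by linarith, 1, ?_⟩
  simp

/-- Points whose first `m` iterates under doubling avoid the pure `f₁` region. -/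
def avoidSet (m : ℕ) : Set (AddCircle (1:ℝ)) :=
  {y | ∀ i < m, rep1 ((fun y : AddCircle (1:ℝ) => (2:ℕ) • y)^[i] y) ∉ Ico (1/2 : ℝ) (7/8)}

lemma avoidSet_measurable (m : ℕ) : MeasurableSet (avoidSet m) := by
  have hT : Measurable (fun y : AddCircle (1:ℝ) => (2:ℕ) • y) :=
    (AddCircle.ergodic_nsmul (T := (1:ℝ)) (n := 2) (by norm_num)).measurable
  have : avoidSet m = ⋂ i : ℕ, ⋂ _ : i < m,
      {y | rep1 ((fun y : AddCircle (1:ℝ) => (2:ℕ) • y)^[i] y) ∉ Ico (1/2 : ℝ) (7/8)} := by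
    ext y; simp [avoidSet]
  rw [this]
  exact MeasurableSet.iInter fun i => MeasurableSet.iInter fun _ =>
    (rep1_measurable.comp (hT.iterate i)) measurableSet_Ico.compl

lemma avoidSet_sub (m : ℕ) (y : AddCircle (1:ℝ)) (hy : y ∈ avoidSet m) :
    ∃ a ∈ Finset.range (m+1), rep1 y ∈ Ico ((1/2:ℝ)^a - (1/2)^m) ((1/2)^a) := by
  induction m generalizing y with
  | zero => exact ⟨0, by simp, by simpa using ⟨rep1_nonneg y, rep1_lt y⟩⟩
  | succ m ih =>
    obtain ⟨a, ha, h1, h2⟩ := ih ((2:ℕ) • y) (by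
      intro i hi
      have := hy (i+1) (by omega)
      simpa [Function.iterate_succ] using this)
    have h0 := hy 0 (by omega)
    simp only [Function.iterate_zero, id, mem_Ico, not_and, not_lt] at h0
    have ha' := Finset.mem_range.1 ha
    by_cases hlow : rep1 y < 1/2
    · rw [rep1_double_low y hlow] at h1 h2
      refine ⟨a+1, by simp; omega, ?_, ?_⟩
      · rw [pow_succ, pow_succ]; linarith
      · rw [pow_succ]; linarith
    · push Not at hlow
      have h78 := h0 hlow
      rw [rep1_double_high y hlow] at h1 h2
      have ha0 : a = 0 := by
        by_contra hne
        have : (1/2:ℝ)^a ≤ (1/2)^1 :=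
          pow_le_pow_of_le_one (by norm_num) (by norm_num) (by omega)
        norm_num at this
        linarith
      subst ha0
      refine ⟨0, by simp, ?_, ?_⟩
      · rw [pow_succ]; simp at h1 ⊢; linarith
      · simpa using rep1_lt y

lemma volume_rep1_Ico (u v : ℝ) :
    (volume : Measure (AddCircle (1:ℝ))) (rep1 ⁻¹' (Ico u v)) ≤ ENNReal.ofReal (v - u) := by
  have hmp := AddCircle.measurePreserving_mk (1:ℝ) 0
  rw [← hmp.measure_preimage (rep1_measurable measurableSet_Ico).nullMeasurableSet]
  rw [Measure.restrict_apply' measurableSet_Ioc]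
  calc volume (((fun x : ℝ => (x : AddCircle (1:ℝ))) ⁻¹' (rep1 ⁻¹' Ico u v)) ∩ Ioc 0 (0+1))
      ≤ volume (Ico u v ∪ {1}) := by
        apply measure_mono
        rintro x ⟨hx, hx0, hx1⟩
        simp only [mem_preimage, rep1_coe] at hx
        rcases eq_or_ne x 1 with h | h
        · right; exact h
        · left
          rwa [Int.fract_eq_self.2 ⟨hx0.le, lt_of_le_of_ne (by linarith) h⟩] at hx
    _ ≤ volume (Ico u v) + volume ({1} : Set ℝ) := measure_union_le _ _
    _ = ENNReal.ofReal (v - u) := by simp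

lemma volume_avoidSet (m : ℕ) :
    (volume : Measure (AddCircle (1:ℝ))).real (avoidSet m) ≤ (m+1) * (1/2)^m := by
  have : (volume : Measure (AddCircle (1:ℝ))) (avoidSet m)
      ≤ ENNReal.ofReal ((m+1) * (1/2)^m) := by
    calc _ ≤ volume (⋃ a ∈ Finset.range (m+1),
            rep1 ⁻¹' (Ico ((1/2:ℝ)^a - (1/2)^m) ((1/2)^a))) := by
          apply measure_mono
          intro y hy
          obtain ⟨a, ha, h⟩ := avoidSet_sub m y hy
          simp only [mem_iUnion]
          exact ⟨a, ha, h⟩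
      _ ≤ ∑ a ∈ Finset.range (m+1), volume (rep1 ⁻¹' (Ico ((1/2:ℝ)^a - (1/2)^m) ((1/2)^a))) :=
          measure_biUnion_finset_le _ _
      _ ≤ ∑ a ∈ Finset.range (m+1), ENNReal.ofReal ((1/2)^m) := by
          apply Finset.sum_le_sum
          intro a _
          refine (volume_rep1_Ico _ _).trans (le_of_eq ?_)
          congr 1; ring
      _ = _ := by
          rw [Finset.sum_const, Finset.card_range, nsmul_eq_mul,
            ENNReal.ofReal_mul (by positivity)]
          congr 1
          rw [← Nat.cast_succ, ENNReal.ofReal_natCast]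
  exact ENNReal.toReal_le_of_le_ofReal (by positivity) this

lemma avoid_small (n : ℕ) (hn : 100 ≤ n) :
    (volume : Measure (AddCircle (1:ℝ))).real (avoidSet (1 + n + n/2)) < (1/2)^n := by
  refine (volume_avoidSet _).trans_lt ?_
  have key : ∀ k : ℕ, 50 ≤ k → 3 * k + 3 < 2 * 2^k := by
    intro k hk
    induction k, hk using Nat.le_induction with
    | base => norm_num
    | succ k hk ih => rw [pow_succ]; omega
  have h1 := key (n/2) (by omega)
  have h2 : (1 + n + n/2) + 1 < 2 * 2^(n/2) := by omega
  have h3 : (((1 + n + n/2 : ℕ) : ℝ) + 1) < 2 * 2^(n/2) := by exact_mod_cast h2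
  have e : (1/2:ℝ)^(1+n+n/2) * (2 * 2^(n/2)) = (1/2)^n := by
    rw [pow_add, pow_add, pow_one]
    have : (1/2:ℝ)^(n/2) * 2^(n/2) = 1 := by rw [← mul_pow]; norm_num
    linear_combination (1/2:ℝ)^n * this
  rw [← e, mul_comm]
  exact mul_lt_mul_of_pos_left h3 (by positivity)

/-- The properties of the lifted fiber maps used in the argument. -/
structure GoodMap (ν : ℝ) (g : ℝ → ℝ) : Prop where
  mono : Monotone g
  deck : ∀ x, g (x + 2) = g x + 2
  inI : ∀ x ∈ Icc (-ν) (1 + ν), g x ∈ Icc (-ν) (1 + ν)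
  up : ∀ x ∈ Icc (-(1 / 3) : ℝ) (-ν), x + ν ^ 2 / 2 ≤ g x
  down : ∀ x ∈ Icc (1 + ν) (4 / 3 : ℝ), g x ≤ x - ν ^ 2 / 2
  expand : ∀ x ∈ Icc (-(2 / 3) : ℝ) (-(1 / 3)), ∀ x' ∈ Icc (-(2 / 3) : ℝ) (-(1 / 3)),
    g x - g x' = (1 + ν) * (x - x')
  low : ∀ x ∈ Icc (0 : ℝ) 1, (1 - ν / 2) * x ≤ g x

lemma GoodMap.comb {ν : ℝ} {g h : ℝ → ℝ} (hg : GoodMap ν g) (hh : GoodMap ν h)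
    {s : ℝ} (hs0 : 0 ≤ s) (hs1 : s ≤ 1) : GoodMap ν (fun x => (1 - s) * g x + s * h x) := by
  have h1 : 0 ≤ 1 - s := by linarith
  refine ⟨?_, ?_, ?_, ?_, ?_, ?_, ?_⟩
  · intro x y hxy
    exact add_le_add (mul_le_mul_of_nonneg_left (hg.mono hxy) h1)
      (mul_le_mul_of_nonneg_left (hh.mono hxy) hs0)
  · intro x
    simp only [hg.deck, hh.deck]; ring
  · intro x hx
    obtain ⟨a, b⟩ := hg.inI x hx
    obtain ⟨c, d⟩ := hh.inI x hx
    constructor <;> nlinarith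
  · intro x hx
    have a := hg.up x hx
    have b := hh.up x hx
    nlinarith
  · intro x hx
    have a := hg.down x hx
    have b := hh.down x hx
    nlinarith
  · intro x hx x' hx'
    have a := hg.expand x hx x' hx'
    have b := hh.expand x hx x' hx'
    linear_combination (1 - s) * a + s * b
  · intro x hx
    have a := hg.low x hx
    have b := hh.low x hx
    nlinarith

lemma lift_coe_eq {a b : ℝ} (h : (a : S1) = (b : S1)) : ∃ k : ℤ, a = b + 2 * k := by
  have h0 : ((a - b : ℝ) : S1) = 0 := by
    rw [AddCircle.coe_sub, h, sub_self]
  obtain ⟨k, hk⟩ := (AddCircle.coe_eq_zero_iff (2:ℝ)).1 h0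
  refine ⟨k, ?_⟩
  rw [zsmul_eq_mul] at hk
  linarith

lemma lift_up {ν : ℝ} (hν0 : 0 < ν) (hν1 : ν ≤ 1/100) {f : S1 → S1} {G : ℝ → ℝ}
    (hc : Continuous G) (hlift : ∀ x : ℝ, ((G x : ℝ) : S1) = f ((x : ℝ) : S1))
    (hend : -(1/3) ≤ G (-ν))
    (hup : ∀ x ∈ Icc (-(1 / 3) : ℝ) (-ν),
      ∃ t : ℝ, x + ν ^ 2 / 2 ≤ t ∧ t ≤ 1 + ν ∧ f ((x : ℝ) : S1) = ((t : ℝ) : S1)) :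
    ∀ x ∈ Icc (-(1 / 3) : ℝ) (-ν), x + ν ^ 2 / 2 ≤ G x := by
  have dich : ∀ x ∈ Icc (-(1 / 3) : ℝ) (-ν), x + ν ^ 2 / 2 ≤ G x ∨ G x ≤ -(99/100) := by
    intro x hx
    obtain ⟨t, h1, h2, h3⟩ := hup x hx
    obtain ⟨k, hk⟩ := lift_coe_eq ((hlift x).trans h3)
    rcases le_or_gt 0 k with h | h
    · left
      have : (0:ℝ) ≤ k := by exact_mod_cast h
      linarith
    · right
      have : (k:ℝ) ≤ -1 := by exact_mod_cast (by omega : k ≤ -1)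
      linarith
  intro x hx
  rcases dich x hx with h | h
  · exact h
  · exfalso
    obtain ⟨x', hx', he⟩ := intermediate_value_Icc hx.2 hc.continuousOn
      (show (-(1/2) : ℝ) ∈ Icc (G x) (G (-ν)) from ⟨by linarith, by linarith⟩)
    have := sq_nonneg ν
    rcases dich x' ⟨hx.1.trans hx'.1, hx'.2⟩ with h' | h'
    · have := hx.1.trans hx'.1
      linarith
    · linarith

lemma lift_down {ν : ℝ} (hν0 : 0 < ν) (hν1 : ν ≤ 1/100) {f : S1 → S1} {G : ℝ → ℝ}
    (hc : Continuous G) (hlift : ∀ x : ℝ, ((G x : ℝ) : S1) = f ((x : ℝ) : S1))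
    (hend : G (1 + ν) ≤ 3/2)
    (hdown : ∀ x ∈ Icc (1 + ν) (4 / 3 : ℝ),
      ∃ t : ℝ, -ν ≤ t ∧ t ≤ x - ν ^ 2 / 2 ∧ f ((x : ℝ) : S1) = ((t : ℝ) : S1)) :
    ∀ x ∈ Icc (1 + ν) (4 / 3 : ℝ), G x ≤ x - ν ^ 2 / 2 := by
  have dich : ∀ x ∈ Icc (1 + ν) (4 / 3 : ℝ), G x ≤ x - ν ^ 2 / 2 ∨ 199/100 ≤ G x := by
    intro x hx
    obtain ⟨t, h1, h2, h3⟩ := hdown x hx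
    obtain ⟨k, hk⟩ := lift_coe_eq ((hlift x).trans h3)
    rcases le_or_gt k 0 with h | h
    · left
      have : (k:ℝ) ≤ 0 := by exact_mod_cast h
      linarith
    · right
      have : (1:ℝ) ≤ k := by exact_mod_cast (by omega : 1 ≤ k)
      linarith
  intro x hx
  rcases dich x hx with h | h
  · exact h
  · exfalso
    obtain ⟨x', hx', he⟩ := intermediate_value_Icc hx.1 hc.continuousOn
      (show (8/5 : ℝ) ∈ Icc (G (1 + ν)) (G x) from ⟨by linarith, by linarith⟩)
    have := sq_nonneg ν
    rcases dich x' ⟨hx'.1, hx'.2.trans hx.2⟩ with h' | h'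
    · have := hx'.2.trans hx.2
      linarith
    · linarith

lemma lift_expand {ν : ℝ} {G : ℝ → ℝ} (hC : ContDiff ℝ 1 G)
    (hJ : ∀ x ∈ Icc (-(2 / 3) : ℝ) (-(1 / 3)), deriv G x = 1 + ν) :
    ∀ x ∈ Icc (-(2 / 3) : ℝ) (-(1 / 3)), ∀ x' ∈ Icc (-(2 / 3) : ℝ) (-(1 / 3)),
    G x - G x' = (1 + ν) * (x - x') := by
  have hd : Differentiable ℝ G := hC.differentiable (by norm_num)
  have key : ∀ x ∈ Icc (-(2 / 3) : ℝ) (-(1 / 3)),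
      G x - (1 + ν) * x = G (-(2/3)) - (1 + ν) * (-(2/3)) := by
    refine constant_of_has_deriv_right_zero (f := fun x => G x - (1+ν) * x) ?_ ?_
    · exact (hd.continuous.sub (continuous_const.mul continuous_id)).continuousOn
    · intro x hx
      have h1 := (hd x).hasDerivAt
      rw [hJ x ⟨hx.1, hx.2.le⟩] at h1
      have h2 := h1.sub ((hasDerivAt_id x).const_mul (1+ν))
      simp only [mul_one, sub_self] at h2
      exact h2.hasDerivWithinAt
  intro x hx x' hx'
  linear_combination key x hx - key x' hx'

section orbit

variable {ν : ℝ} {g : ℕ → ℝ → ℝ} {u : ℕ → ℝ}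

lemma stay_in_I (hg : ∀ k, GoodMap ν (g k)) (hu : ∀ k, u (k+1) = g k (u k))
    {K : ℕ} (hK : u K ∈ Icc (-ν) (1 + ν)) : ∀ k, K ≤ k → u k ∈ Icc (-ν) (1 + ν) := by
  intro k hk
  induction k, hk using Nat.le_induction with
  | base => exact hK
  | succ k hk ih => rw [hu]; exact (hg k).inI _ ih

lemma reach_I (hν0 : 0 < ν) (hν1 : ν ≤ 1/100)
    (hg : ∀ k, GoodMap ν (g k)) (hu : ∀ k, u (k+1) = g k (u k))
    {K : ℕ} (hK : u K ∈ Icc (-(1/3) : ℝ) (4/3)) : ∃ k, u k ∈ Icc (-ν) (1 + ν) := by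
  by_contra hno
  push Not at hno
  have hsq : 0 < ν^2/2 := by positivity
  have hmem1 : -ν ∈ Icc (-ν) (1 + ν) := ⟨le_rfl, by linarith⟩
  have hmem2 : 1 + ν ∈ Icc (-ν) (1 + ν) := ⟨by linarith, le_rfl⟩
  rcases lt_or_ge (u K) (-ν) with hlt | hge
  · have key : ∀ j : ℕ, -(1/3) + j * (ν^2/2) ≤ u (K + j) ∧ u (K+j) < -ν := by
      intro j
      induction j with
      | zero => simp only [Nat.cast_zero, zero_mul, add_zero]; exact ⟨hK.1, hlt⟩
      | succ j ih =>
        obtain ⟨h1, h2⟩ := ih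
        have h0 : 0 ≤ (j:ℝ) * (ν^2/2) := by positivity
        have hup := (hg (K+j)).up (u (K+j)) ⟨by linarith, h2.le⟩
        have hm := (hg (K+j)).mono h2.le
        have hI := ((hg (K+j)).inI _ hmem1).2
        have e : u (K + (j+1)) = g (K+j) (u (K+j)) := hu (K+j)
        refine ⟨by rw [e]; push_cast; linarith, ?_⟩
        by_contra hcon
        push Not at hcon
        exact hno (K + (j+1)) ⟨hcon, by rw [e]; linarith⟩
    obtain ⟨j, hj⟩ := exists_nat_gt (1 / (ν^2/2))
    rw [div_lt_iff₀ hsq] at hj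
    have := key j
    linarith
  · have hgt : 1 + ν < u K := by
      by_contra hcon
      push Not at hcon
      exact hno K ⟨hge, hcon⟩
    have key : ∀ j : ℕ, u (K + j) ≤ 4/3 - j * (ν^2/2) ∧ 1 + ν < u (K+j) := by
      intro j
      induction j with
      | zero => simp only [Nat.cast_zero, zero_mul, add_zero, sub_zero]; exact ⟨hK.2, hgt⟩
      | succ j ih =>
        obtain ⟨h1, h2⟩ := ih
        have h0 : 0 ≤ (j:ℝ) * (ν^2/2) := by positivity
        have hup := (hg (K+j)).down (u (K+j)) ⟨h2.le, by linarith⟩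
        have hm := (hg (K+j)).mono h2.le
        have hI := ((hg (K+j)).inI _ hmem2).1
        have e : u (K + (j+1)) = g (K+j) (u (K+j)) := hu (K+j)
        refine ⟨by rw [e]; push_cast; linarith, ?_⟩
        by_contra hcon
        push Not at hcon
        exact hno (K + (j+1)) ⟨by rw [e]; linarith, hcon⟩
    obtain ⟨j, hj⟩ := exists_nat_gt (1 / (ν^2/2))
    rw [div_lt_iff₀ hsq] at hj
    have := key j
    linarith

lemma reach_I_circle (hν0 : 0 < ν) (hν1 : ν ≤ 1/100)
    (hg : ∀ k, GoodMap ν (g k)) (hu : ∀ k, u (k+1) = g k (u k))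
    (h0 : u 0 ∈ Icc (-(2/3) : ℝ) (4/3)) (hJ : ¬ ∀ k, u k ∈ Icc (-(2/3) : ℝ) (-(1/3))) :
    ∃ k, ∃ v ∈ Icc (-ν) (1 + ν), (u k : S1) = (v : S1) := by
  have hmem1 : -ν ∈ Icc (-ν) (1 + ν) := ⟨le_rfl, by linarith⟩
  have hmem2 : 1 + ν ∈ Icc (-ν) (1 + ν) := ⟨by linarith, le_rfl⟩
  by_contra hno
  apply hJ
  intro k
  induction k with
  | zero =>
    refine ⟨h0.1, ?_⟩
    by_contra hcon
    push Not at hcon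
    obtain ⟨k, hk⟩ := reach_I hν0 hν1 hg hu (K := 0) ⟨hcon.le, h0.2⟩
    exact hno ⟨k, u k, hk, rfl⟩
  | succ k ih =>
    have hupper : u (k+1) ≤ 1 + ν := by
      rw [hu]
      exact ((hg k).mono (show u k ≤ -ν by linarith [ih.2])).trans ((hg k).inI _ hmem1).2
    have hlower : -ν - 2 ≤ u (k+1) := by
      rw [hu]
      have h1 := ((hg k).inI _ hmem2).1
      have h2 := (hg k).mono (show 1 + ν ≤ u k + 2 by linarith [ih.1])
      rw [(hg k).deck] at h2
      linarith
    constructor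
    · by_contra hcon
      push Not at hcon
      obtain ⟨j, hj⟩ := reach_I (u := fun k => u k + 2) hν0 hν1 hg
        (fun k => by simp only [hu, (hg k).deck]) (K := k+1)
        ⟨by linarith, by linarith⟩
      refine hno ⟨j, u j + 2, hj, ?_⟩
      have := AddCircle.coe_add_period (2:ℝ) (u j)
      exact this.symm
    · by_contra hcon
      push Not at hcon
      obtain ⟨j, hj⟩ := reach_I hν0 hν1 hg hu (K := k+1) ⟨hcon.le, by linarith⟩
      exact hno ⟨j, u j, hj, rfl⟩

lemma stay_J_unique (hν0 : 0 < ν)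
    (hg : ∀ k, GoodMap ν (g k)) (hu : ∀ k, u (k+1) = g k (u k)) {u' : ℕ → ℝ}
    (hu' : ∀ k, u' (k+1) = g k (u' k))
    (hJ : ∀ k, u k ∈ Icc (-(2/3) : ℝ) (-(1/3)))
    (hJ' : ∀ k, u' k ∈ Icc (-(2/3) : ℝ) (-(1/3))) : u 0 = u' 0 := by
  have key : ∀ k, u k - u' k = (1+ν)^k * (u 0 - u' 0) := by
    intro k
    induction k with
    | zero => simp
    | succ k ih =>
      rw [hu, hu', (hg k).expand _ (hJ k) _ (hJ' k), ih, pow_succ]; ring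
  by_contra hne
  have hpos : 0 < |u 0 - u' 0| := abs_pos.2 (sub_ne_zero.2 hne)
  obtain ⟨k, hk⟩ := pow_unbounded_of_one_lt (1 / |u 0 - u' 0|) (show 1 < 1 + ν by linarith)
  rw [div_lt_iff₀ hpos] at hk
  have h1 : |u k - u' k| = (1+ν)^k * |u 0 - u' 0| := by
    rw [key, abs_mul, abs_of_nonneg (by positivity)]
  have h2 : |u k - u' k| ≤ 1 := by
    rw [abs_le]
    constructor <;> linarith [(hJ k).1, (hJ k).2, (hJ' k).1, (hJ' k).2]
  linarith

lemma low_bound (hν0 : 0 < ν) (hν1 : ν ≤ 1/100)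
    (hg : ∀ k, GoodMap ν (g k)) (hu : ∀ k, u (k+1) = g k (u k))
    {j : ℕ} (hj : 3/4 ≤ u j) (i : ℕ) : 3/4 * (1 - ν/2)^i ≤ u (j + i) := by
  induction i with
  | zero => simpa using hj
  | succ i ih =>
    have h0 : 0 ≤ (1 - ν/2)^i := pow_nonneg (by linarith) _
    have h1 : (1 - ν/2)^i ≤ 1 := pow_le_one₀ (by linarith) (by linarith)
    have := (hg (j+i)).low (3/4 * (1 - ν/2)^i) ⟨by positivity, by linarith⟩
    have e : u (j + (i+1)) = g (j+i) (u (j+i)) := hu (j+i)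
    rw [e]
    refine le_trans ?_ ((hg (j+i)).mono ih)
    rw [pow_succ]
    linarith

end orbit

lemma pow_third (n : ℕ) (hn : 100 ≤ n) (ν : ℝ) (hν : ν = 1 / (n : ℝ)) (i : ℕ)
    (hi : i ≤ n + n/2) : 1/3 ≤ (1 - ν/2)^i := by
  have hn0 : (100:ℝ) ≤ n := by exact_mod_cast hn
  have hnν : n * ν = 1 := by rw [hν]; field_simp
  have hν0 : 0 < ν := by rw [hν]; positivity
  have hν1 : ν ≤ 1/100 := by nlinarith
  have b : ∀ k : ℕ, 1 - k * (ν/2) ≤ (1 - ν/2)^k := by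
    intro k
    have := one_add_mul_le_pow (a := -(ν/2)) (by linarith) k
    have e : 1 + -(ν/2) = 1 - ν/2 := by ring
    rw [e] at this
    linarith
  have b1 := b n
  have b2 := b (n/2)
  have h2 : ((n/2 : ℕ) : ℝ) ≤ n/2 := Nat.cast_div_le
  have c1 : 1/2 ≤ (1 - ν/2)^n := by linarith
  have c2 : 3/4 ≤ (1 - ν/2)^(n/2) := by nlinarith
  calc (1:ℝ)/3 ≤ 1/2 * (3/4) := by norm_num
    _ ≤ (1 - ν/2)^n * (1 - ν/2)^(n/2) := mul_le_mul c1 c2 (by norm_num) (by linarith)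
    _ = (1 - ν/2)^(n + n/2) := (pow_add _ _ _).symm
    _ ≤ (1 - ν/2)^i := pow_le_pow_of_le_one (by linarith) (by linarith) hi

/-- The weight of `f₁` in the fiber map over `y`. -/
noncomputable def wt (y : ℝ) : ℝ :=
  if y < 3 / 8 then 0
  else if y < 1 / 2 then (8 * y - 3) ^ 2
  else if y < 7 / 8 then 1
  else (8 - 8 * y) ^ 2

lemma wt_mem (y : ℝ) (h1 : y < 1) : wt y ∈ Icc (0:ℝ) 1 := by
  unfold wt
  split_ifs
  · simp
  · constructor <;> nlinarith
  · simp
  · constructor <;> nlinarith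

lemma wt_measurable : Measurable wt := by
  unfold wt
  refine Measurable.ite measurableSet_Iio measurable_const ?_
  refine Measurable.ite measurableSet_Iio (by fun_prop) ?_
  exact Measurable.ite measurableSet_Iio measurable_const (by fun_prop)

lemma wt_one {y : ℝ} (h : y ∈ Ico (1/2 : ℝ) (7/8)) : wt y = 1 := by
  obtain ⟨h1, h2⟩ := h
  unfold wt
  rw [if_neg (by linarith), if_neg (by linarith), if_pos h2]

/-- The lift of the fiber map over `y`. -/
noncomputable def gLift (G0 G1 : ℝ → ℝ) (y : ℝ) (x : ℝ) : ℝ :=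
  (1 - wt y) * G0 x + wt y * G1 x

lemma fiberFam_coe {f0 f1 : S1 → S1} {G0 G1 : ℝ → ℝ} {ft : ℝ → S1 → S1}
    (hlift0 : ∀ x : ℝ, ((G0 x : ℝ) : S1) = f0 ((x : ℝ) : S1))
    (hlift1 : ∀ x : ℝ, ((G1 x : ℝ) : S1) = f1 ((x : ℝ) : S1))
    (hft : ∀ t : ℝ, ∀ x : ℝ,
      ft t ((x : ℝ) : S1) = (((1 - t ^ 2) * G0 x + t ^ 2 * G1 x : ℝ) : S1)) (y x : ℝ) :
    fiberFam f0 f1 ft y (x : S1) = ((gLift G0 G1 y x : ℝ) : S1) := by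
  unfold fiberFam gLift wt
  split_ifs
  · rw [← hlift0]; simp
  · rw [hft]
  · rw [← hlift1]; simp
  · rw [hft]

/-- Orbit of a nonautonomous sequence of maps. -/
def orb (g : ℕ → ℝ → ℝ) (x : ℝ) : ℕ → ℝ
  | 0 => x
  | (k + 1) => g k (orb g x k)

lemma orb_succ (g : ℕ → ℝ → ℝ) (x : ℝ) (k : ℕ) : orb g x (k+1) = g k (orb g x k) := rfl

/-- The doubling map. -/
def dbl (y : AddCircle (1:ℝ)) : AddCircle (1:ℝ) := (2:ℕ) • y

lemma almostStep_base (lam : ℝ) (f0 f1 : S1 → S1) (ft : ℝ → S1 → S1) (p : Base × S1) (k : ℕ) :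
    ((almostStep lam f0 f1 ft)^[k] p).1.1 = dbl^[k] p.1.1 := by
  induction k with
  | zero => rfl
  | succ k ih =>
    rw [Function.iterate_succ_apply', Function.iterate_succ_apply', ← ih]
    simp [almostStep, solenoidMap, dbl, two_nsmul]

lemma almostStep_fiber (lam : ℝ) {f0 f1 : S1 → S1} {G0 G1 : ℝ → ℝ} {ft : ℝ → S1 → S1}
    (hfc : ∀ y x : ℝ, fiberFam f0 f1 ft y (x : S1) = ((gLift G0 G1 y x : ℝ) : S1))
    (p : Base × S1) (K : ℕ) (v : ℝ) (hv : ((almostStep lam f0 f1 ft)^[K] p).2 = (v : S1)) (k : ℕ) :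
    ((almostStep lam f0 f1 ft)^[K + k] p).2
      = ((orb (fun k => gLift G0 G1 (rep1 (dbl^[K + k] p.1.1))) v k : ℝ) : S1) := by
  induction k with
  | zero => exact hv
  | succ k ih =>
    rw [← add_assoc, Function.iterate_succ_apply', orb_succ]
    have h1 := almostStep_base lam f0 f1 ft p (K + k)
    conv_lhs => rw [almostStep]
    simp only
    rw [h1, ih, hfc]

lemma almostStep_measurable (lam : ℝ) {f0 f1 : S1 → S1} {G0 G1 : ℝ → ℝ} {ft : ℝ → S1 → S1}
    (hfc : ∀ y x : ℝ, fiberFam f0 f1 ft y (x : S1) = ((gLift G0 G1 y x : ℝ) : S1))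
    (h0 : Measurable G0) (h1 : Measurable G1) : Measurable (almostStep lam f0 f1 ft) := by
  let rep2 : S1 → ℝ := fun x => ((AddCircle.equivIco (2 : ℝ) 0) x : ℝ)
  have hr2 : Measurable rep2 :=
    measurable_subtype_coe.comp (AddCircle.measurableEquivIco (2:ℝ) 0).measurable
  have hr2c : ∀ x : S1, ((rep2 x : ℝ) : S1) = x := fun x =>
    (AddCircle.equivIco (2 : ℝ) 0).symm_apply_apply x
  have hcirc : Continuous (fun y : AddCircle (1:ℝ) => ((AddCircle.toCircle y : Circle) : ℂ)) :=
    continuous_subtype_val.comp AddCircle.continuous_toCircle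
  have hsol : Measurable (solenoidMap lam) := by
    unfold solenoidMap
    refine Measurable.prodMk ?_ ?_
    · exact measurable_fst.add measurable_fst
    · exact (hcirc.measurable.comp measurable_fst).add (measurable_snd.const_mul _)
  refine Measurable.prodMk (hsol.comp measurable_fst) ?_
  have he : (fun p : Base × S1 => fiberFam f0 f1 ft (rep1 p.1.1) p.2)
      = fun p : Base × S1 => ((gLift G0 G1 (rep1 p.1.1) (rep2 p.2) : ℝ) : S1) := by
    funext p
    rw [← hfc, hr2c]
  rw [he]
  refine AddCircle.measurable_mk'.comp ?_
  have hw : Measurable fun p : Base × S1 => wt (rep1 p.1.1) :=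
    wt_measurable.comp (rep1_measurable.comp (measurable_fst.comp measurable_fst))
  have hx : Measurable fun p : Base × S1 => rep2 p.2 := hr2.comp measurable_snd
  exact ((measurable_const.sub hw).mul (h0.comp hx)).add (hw.mul (h1.comp hx))

lemma singleton_null (x : S1) : (volume : Measure S1) {x} = 0 := by
  have := AddCircle.volume_closedBall (T := (2:ℝ)) (x := x) 0
  rw [closedBall_zero] at this
  rw [this]; simp

lemma sum_compare {a b : ℕ → ℝ} (ha : ∀ k, a k ≤ 1) (hb : ∀ k, 0 ≤ b k) {K Q : ℕ} (hKQ : K ≤ Q)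
    (h : ∀ k, a (Q + k) ≤ b (K + k)) (N : ℕ) :
    ∑ k ∈ Finset.range N, a k ≤ Q + ∑ k ∈ Finset.range N, b k := by
  have h1 : ∀ N : ℕ, ∑ k ∈ Finset.range N, a k ≤ N := by
    intro N
    refine (Finset.sum_le_sum (fun k _ => ha k)).trans ?_
    simp
  rcases le_total N Q with hN | hN
  · have h2 : 0 ≤ ∑ k ∈ Finset.range N, b k := Finset.sum_nonneg fun k _ => hb k
    have h3 : (N:ℝ) ≤ Q := by exact_mod_cast hN
    linarith [h1 N]
  · obtain ⟨M, rfl⟩ := Nat.exists_eq_add_of_le hN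
    rw [Finset.sum_range_add]
    have h2 : ∑ i ∈ Finset.range M, a (Q + i) ≤ ∑ i ∈ Finset.range M, b (K + i) :=
      Finset.sum_le_sum fun i _ => h i
    have h3 : ∑ i ∈ Finset.range M, b (K + i) ≤ ∑ i ∈ Finset.range (K + M), b i := by
      rw [Finset.sum_range_add]
      have : 0 ≤ ∑ k ∈ Finset.range K, b k := Finset.sum_nonneg fun k _ => hb k
      linarith
    have h4 : ∑ i ∈ Finset.range (K + M), b i ≤ ∑ i ∈ Finset.range (Q + M), b i :=
      Finset.sum_le_sum_of_subset_of_nonneg (Finset.range_mono (by omega)) fun i _ _ => hb i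
    linarith [h1 Q]

lemma limsup_le_of_linear {u : ℕ → ℝ} (h0 : ∀ N, 0 ≤ u N) (α D : ℝ)
    (h : ∀ N : ℕ, u N * N ≤ α * N + D) : limsup u atTop ≤ α := by
  have ht : Tendsto (fun N : ℕ => α + D / N) atTop (𝓝 α) := by
    simpa using tendsto_const_nhds.add (tendsto_const_div_atTop_nhds_zero_nat D)
  rw [← ht.limsup_eq]
  refine limsup_le_limsup ?_ ?_ ht.isBoundedUnder_le
  · filter_upwards [eventually_gt_atTop 0] with N hN
    have hN' : (0:ℝ) < N := by exact_mod_cast hN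
    have := h N
    have e : α + D / N = (α * N + D) / N := by field_simp
    rw [e, le_div_iff₀ hN']
    exact this
  · exact isCoboundedUnder_le_of_le atTop (x := 0) h0

/-- Lemma on invisibility for the model map `F`. Fix `n ≥ 100`,
`ν = 1/n`. Let `f₀, f₁` be orientation-preserving `C¹` diffeomorphisms of `S¹ = ℝ/2ℤ`
(with lifts `G₀, G₁`) such that on `I = [−ν, 1+ν]`, `f₀(x) = (1 − ν/2)x` and
`f₁(x) = 1 + (1/4 − ν)(x−1)`; on `J = [−2/3, −1/3]` both have derivative identically
`1 + ν` and exactly one (repelling) fixed point, at distance at least `ν` from the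
endpoints of `J`; and `f_j(x) ≥ x + ν²/2` on `[−1/3, −ν]`, `f_j(x) ≤ x − ν²/2` on
`[1+ν, 4/3]` for `j = 0,1`. Let `f_t = (1−t²)f₀ + t²f₁` (via the lifts) and let `F` be
the associated almost step skew product over the solenoid. Then `V = π⁻¹((0, 1/4))` is
`2^{−n}`-invisible for `F` with respect to the Lebesgue measure on `B × S¹`. -/
theorem stmt_18 (n : ℕ) (hn : 100 ≤ n) (ν : ℝ) (hν : ν = 1 / (n : ℝ))
    (R lam : ℝ) (hR : 2 ≤ R) (hlam0 : 0 < lam) (hlam1 : lam < 0.1)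
    (hlamR : lam * R < 1)
    (f0 f1 : S1 ≃ₜ S1) (G0 G1 : ℝ → ℝ)
    -- `G₀, G₁` are `C¹`, orientation-preserving, nonsingular lifts of `f₀, f₁`:
    (hlift0 : ∀ x : ℝ, ((G0 x : ℝ) : S1) = f0 ((x : ℝ) : S1))
    (hlift1 : ∀ x : ℝ, ((G1 x : ℝ) : S1) = f1 ((x : ℝ) : S1))
    (hmono0 : StrictMono G0) (hmono1 : StrictMono G1)
    (hdeck0 : ∀ x, G0 (x + 2) = G0 x + 2) (hdeck1 : ∀ x, G1 (x + 2) = G1 x + 2)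
    (hC1_0 : ContDiff ℝ 1 G0) (hC1_1 : ContDiff ℝ 1 G1)
    (hpos0 : ∀ x, 0 < deriv G0 x) (hpos1 : ∀ x, 0 < deriv G1 x)
    -- on `I = [−ν, 1+ν]` the maps are the model affine contractions:
    (hI0 : ∀ x ∈ Icc (-ν) (1 + ν), G0 x = (1 - ν / 2) * x)
    (hI1 : ∀ x ∈ Icc (-ν) (1 + ν), G1 x = 1 + (1 / 4 - ν) * (x - 1))
    -- on `J = [−2/3, −1/3]` the derivative is identically `1 + ν`:
    (hJ0 : ∀ x ∈ Icc (-(2 / 3) : ℝ) (-(1 / 3)), deriv G0 x = 1 + ν)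
    (hJ1 : ∀ x ∈ Icc (-(2 / 3) : ℝ) (-(1 / 3)), deriv G1 x = 1 + ν)
    -- each has exactly one fixed point in `J`, `ν`-far from the endpoints of `J`:
    (hfix0 : ∃ r ∈ Icc (-(2 / 3) + ν : ℝ) (-(1 / 3) - ν),
      f0 ((r : ℝ) : S1) = ((r : ℝ) : S1) ∧
      ∀ x ∈ Icc (-(2 / 3) : ℝ) (-(1 / 3)), f0 ((x : ℝ) : S1) = ((x : ℝ) : S1) → x = r)
    (hfix1 : ∃ r ∈ Icc (-(2 / 3) + ν : ℝ) (-(1 / 3) - ν),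
      f1 ((r : ℝ) : S1) = ((r : ℝ) : S1) ∧
      ∀ x ∈ Icc (-(2 / 3) : ℝ) (-(1 / 3)), f1 ((x : ℝ) : S1) = ((x : ℝ) : S1) → x = r)
    -- one-way motion between `J` and `I`:
    (hup0 : ∀ x ∈ Icc (-(1 / 3) : ℝ) (-ν),
      ∃ t : ℝ, x + ν ^ 2 / 2 ≤ t ∧ t ≤ 1 + ν ∧ f0 ((x : ℝ) : S1) = ((t : ℝ) : S1))
    (hup1 : ∀ x ∈ Icc (-(1 / 3) : ℝ) (-ν),
      ∃ t : ℝ, x + ν ^ 2 / 2 ≤ t ∧ t ≤ 1 + ν ∧ f1 ((x : ℝ) : S1) = ((t : ℝ) : S1))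
    (hdown0 : ∀ x ∈ Icc (1 + ν) (4 / 3 : ℝ),
      ∃ t : ℝ, -ν ≤ t ∧ t ≤ x - ν ^ 2 / 2 ∧ f0 ((x : ℝ) : S1) = ((t : ℝ) : S1))
    (hdown1 : ∀ x ∈ Icc (1 + ν) (4 / 3 : ℝ),
      ∃ t : ℝ, -ν ≤ t ∧ t ≤ x - ν ^ 2 / 2 ∧ f1 ((x : ℝ) : S1) = ((t : ℝ) : S1))
    -- the isotopy `f_t = (1−t²)f₀ + t²f₁`, defined via the lifts:
    (ft : ℝ → S1 → S1)
    (hft : ∀ t : ℝ, ∀ x : ℝ,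
      ft t ((x : ℝ) : S1) = (((1 - t ^ 2) * G0 x + t ^ 2 * G1 x : ℝ) : S1)) :
    ∀ᵐ p ∂(((volume : Measure (AddCircle (1 : ℝ))).prod
        ((volume : Measure ℂ).restrict (closedBall (0 : ℂ) R))).prod
        (volume : Measure S1)),
      limsup (fun N : ℕ => visitFreq (almostStep lam f0 f1 ft)
        {q : Base × S1 | q.2 ∈ (fun t : ℝ => ((t : ℝ) : S1)) '' Ioo 0 (1 / 4)} p N)
        atTop ≤ (1 / 2 : ℝ) ^ n := by
  have hn0 : (100:ℝ) ≤ n := by exact_mod_cast hn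
  have hnν : n * ν = 1 := by rw [hν]; field_simp
  have hν0 : 0 < ν := by rw [hν]; positivity
  have hν1 : ν ≤ 1/100 := by nlinarith
  have hmem1 : -ν ∈ Icc (-ν) (1 + ν) := ⟨le_rfl, by linarith⟩
  have hmem2 : 1 + ν ∈ Icc (-ν) (1 + ν) := ⟨by linarith, le_rfl⟩
  -- the two basic maps are good
  have good0 : GoodMap ν G0 := by
    refine ⟨hmono0.monotone, hdeck0, ?_, ?_, ?_, lift_expand hC1_0 hJ0, ?_⟩
    · intro x hx
      rw [hI0 x hx]
      obtain ⟨h1, h2⟩ := hx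
      constructor <;> nlinarith
    · exact lift_up hν0 hν1 hC1_0.continuous hlift0 (by rw [hI0 _ hmem1]; nlinarith) hup0
    · exact lift_down hν0 hν1 hC1_0.continuous hlift0 (by rw [hI0 _ hmem2]; nlinarith) hdown0
    · intro x hx
      rw [hI0 x ⟨by linarith [hx.1], by linarith [hx.2]⟩]
  have good1 : GoodMap ν G1 := by
    refine ⟨hmono1.monotone, hdeck1, ?_, ?_, ?_, lift_expand hC1_1 hJ1, ?_⟩
    · intro x hx
      rw [hI1 x hx]
      obtain ⟨h1, h2⟩ := hx
      constructor <;> nlinarith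
    · exact lift_up hν0 hν1 hC1_1.continuous hlift1 (by rw [hI1 _ hmem1]; nlinarith) hup1
    · exact lift_down hν0 hν1 hC1_1.continuous hlift1 (by rw [hI1 _ hmem2]; nlinarith) hdown1
    · intro x hx
      rw [hI1 x ⟨by linarith [hx.1], by linarith [hx.2]⟩]
      obtain ⟨h1, h2⟩ := hx
      nlinarith [mul_nonneg hν0.le h1, mul_nonneg hν0.le (sub_nonneg.2 h2)]
  have goodg : ∀ y : AddCircle (1:ℝ), GoodMap ν (gLift G0 G1 (rep1 y)) := fun y =>
    good0.comb good1 (wt_mem _ (rep1_lt y)).1 (wt_mem _ (rep1_lt y)).2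
  have hfc := fiberFam_coe (f0 := f0) (f1 := f1) hlift0 hlift1 hft
  have hFm := almostStep_measurable lam hfc hC1_0.continuous.measurable hC1_1.continuous.measurable
  set F := almostStep lam f0 f1 ft with hF
  -- almost every orbit enters `I`
  have hKc : IsClosed ((fun t : ℝ => ((t : ℝ) : S1)) '' Icc (-ν) (1 + ν)) :=
    (isCompact_Icc.image (AddCircle.continuous_mk' (2:ℝ))).isClosed
  let Z : Set (Base × S1) :=
    {p | ∀ k : ℕ, (F^[k] p).2 ∉ (fun t : ℝ => ((t : ℝ) : S1)) '' Icc (-ν) (1 + ν)}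
  have hZm : MeasurableSet Z := by
    have : Z = ⋂ k : ℕ, (fun p => (F^[k] p).2) ⁻¹'
        ((fun t : ℝ => ((t : ℝ) : S1)) '' Icc (-ν) (1 + ν))ᶜ := by
      ext p; simp [Z]
    rw [this]
    exact MeasurableSet.iInter fun k =>
      (measurable_snd.comp (hFm.iterate k)) hKc.measurableSet.compl
  have hstay : ∀ (b : Base) (x : S1), (b, x) ∈ Z → ∃ r : ℝ, (r : S1) = x ∧
      ∀ k, orb (fun k => gLift G0 G1 (rep1 (dbl^[k] b.1))) r k
        ∈ Icc (-(2/3) : ℝ) (-(1/3)) := by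
    intro b x hx
    let r : ℝ := ((AddCircle.equivIco (2 : ℝ) (-(2/3))) x : ℝ)
    have hrm := ((AddCircle.equivIco (2 : ℝ) (-(2/3))) x).2
    have hr : (r : S1) = x := (AddCircle.equivIco (2 : ℝ) (-(2/3))).symm_apply_apply x
    refine ⟨r, hr, ?_⟩
    by_contra hcon
    obtain ⟨k, v, hv, he⟩ := reach_I_circle hν0 hν1
      (g := fun k => gLift G0 G1 (rep1 (dbl^[k] b.1)))
      (fun k => goodg _) (fun k => orb_succ _ r k)
      (show r ∈ Icc (-(2/3) : ℝ) (4/3) from ⟨hrm.1, by have := hrm.2; linarith⟩) hcon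
    refine hx k ⟨v, hv, ?_⟩
    have := almostStep_fiber lam hfc (b, x) 0 r (by simpa using hr.symm) k
    simp only [zero_add] at this
    rw [hF, this, he]
  have hZ0 : ∀ᵐ p ∂(((volume : Measure (AddCircle (1 : ℝ))).prod
        ((volume : Measure ℂ).restrict (closedBall (0 : ℂ) R))).prod
        (volume : Measure S1)), p ∉ Z := by
    rw [← measure_eq_zero_iff_ae_notMem, Measure.measure_prod_null hZm]
    refine Eventually.of_forall fun b => ?_
    have hsub : (Prod.mk b ⁻¹' Z).Subsingleton := by
      intro x hx x' hx'
      obtain ⟨r, hr, h1⟩ := hstay b x hx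
      obtain ⟨r', hr', h1'⟩ := hstay b x' hx'
      have := stay_J_unique hν0 (g := fun k => gLift G0 G1 (rep1 (dbl^[k] b.1)))
        (fun k => goodg _) (fun k => orb_succ _ r k) (fun k => orb_succ _ r' k) h1 h1'
      have e : r = r' := this
      rw [← hr, ← hr', e]
    rcases hsub.eq_empty_or_singleton with h | ⟨x, h⟩
    · simp [h]
    · simp only [h, Pi.zero_apply]; exact singleton_null x
  -- frequency of the rare symbolic event
  have hfreq : ∀ᵐ p ∂(((volume : Measure (AddCircle (1 : ℝ))).prod
        ((volume : Measure ℂ).restrict (closedBall (0 : ℂ) R))).prod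
        (volume : Measure S1)), ∃ C : ℝ, ∀ N : ℕ,
      ∑ k ∈ Finset.range N,
        (avoidSet (1 + n + n/2)).indicator (fun _ => (1:ℝ)) (dbl^[k] p.1.1)
        ≤ (1/2)^n * N + C := by
    have herg : Ergodic dbl (volume : Measure (AddCircle (1:ℝ))) :=
      AddCircle.ergodic_nsmul (T := (1:ℝ)) (n := 2) (by norm_num)
    have hp : IsProbabilityMeasure (volume : Measure (AddCircle (1:ℝ))) :=
      ⟨by rw [AddCircle.measure_univ]; simp⟩
    have h1 := ae_visit_bound herg (avoidSet_measurable (1 + n + n/2)) ((1/2)^n)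
      (avoid_small n hn)
    exact Measure.quasiMeasurePreserving_fst.ae (Measure.quasiMeasurePreserving_fst.ae h1)
  filter_upwards [hZ0, hfreq] with p hp ⟨C, hC⟩
  simp only [Z, mem_ofPred_eq, not_forall, not_not] at hp
  obtain ⟨K, v, hv, hvK⟩ := hp
  set m := 1 + n + n/2 with hm
  set u := orb (fun k => gLift G0 G1 (rep1 (dbl^[K + k] p.1.1))) v with hu
  have hus : ∀ k, u (k+1) = gLift G0 G1 (rep1 (dbl^[K + k] p.1.1)) (u k) := fun k => rfl
  have huF : ∀ k, (F^[K + k] p).2 = ((u k : ℝ) : S1) := fun k =>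
    almostStep_fiber lam hfc p K v hvK.symm k
  have huI : ∀ k, u k ∈ Icc (-ν) (1 + ν) := fun k =>
    stay_in_I (g := fun k => gLift G0 G1 (rep1 (dbl^[K + k] p.1.1))) (fun k => goodg _) hus
      (K := 0) hv k (Nat.zero_le k)
  set V : Set (Base × S1) :=
    {q : Base × S1 | q.2 ∈ (fun t : ℝ => ((t : ℝ) : S1)) '' Ioo 0 (1 / 4)} with hV
  have hvisit : ∀ k, F^[K + m + k] p ∈ V → dbl^[K + k] p.1.1 ∈ avoidSet m := by
    intro k hk
    obtain ⟨w, hw, hwe⟩ := hk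
    have e1 : K + m + k = K + (k + m) := by ring
    rw [e1, huF] at hwe
    obtain ⟨l, hl⟩ := lift_coe_eq hwe
    have hI := huI (k + m)
    have hl0 : l = 0 := by
      have a1 : (-1:ℝ) < l := by linarith [hI.1, hI.2, hw.1, hw.2]
      have a2 : (l:ℝ) < 1 := by linarith [hI.1, hI.2, hw.1, hw.2]
      have b1 : -1 < l := by exact_mod_cast a1
      have b2 : l < 1 := by exact_mod_cast a2
      omega
    subst hl0
    have hlt : u (k + m) < 1/4 := by
      have := hw.2
      simp at hl
      linarith
    intro i hi hmem
    have e2 : (fun y : AddCircle (1:ℝ) => (2:ℕ) • y)^[i] (dbl^[K + k] p.1.1)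
        = dbl^[K + (k + i)] p.1.1 := by
      rw [← add_assoc, add_comm (K + k) i, Function.iterate_add_apply dbl i (K + k)]
      rfl
    rw [e2] at hmem
    have h34 : 3/4 ≤ u (k + i + 1) := by
      rw [hus, gLift, wt_one hmem, hI1 _ (huI _)]
      have := (huI (k+i)).1
      nlinarith
    have hlow := low_bound hν0 hν1 (g := fun k => gLift G0 G1 (rep1 (dbl^[K + k] p.1.1)))
      (fun k => goodg _) hus h34 (m - 1 - i)
    have e3 : k + i + 1 + (m - 1 - i) = k + m := by omega
    rw [e3] at hlow
    have := pow_third n hn ν hν (m - 1 - i) (by omega)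
    linarith
  have hcmp := fun N => sum_compare
    (a := fun k => V.indicator (fun _ => (1:ℝ)) (F^[k] p))
    (b := fun k => (avoidSet m).indicator (fun _ => (1:ℝ)) (dbl^[k] p.1.1))
    (fun k => by by_cases h : F^[k] p ∈ V <;> simp [h])
    (fun k => indicator_nonneg (fun _ _ => zero_le_one) _)
    (K := K) (Q := K + m) (by omega)
    (fun k => by
      by_cases h : F^[K + m + k] p ∈ V
      · simp [h, hvisit k h]
      · simp only [indicator_of_notMem h]
        exact indicator_nonneg (fun _ _ => zero_le_one) _) N
  refine limsup_le_of_linear (D := (K + m : ℕ) + C) ?_ _ ?_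
  · intro N
    exact div_nonneg (Finset.sum_nonneg fun k _ => indicator_nonneg (fun _ _ => zero_le_one) _)
      (Nat.cast_nonneg N)
  · intro N
    have h1 := hcmp N
    have h2 := hC N
    have h3 : visitFreq F V p N * N ≤ ∑ k ∈ Finset.range N, V.indicator (fun _ => (1:ℝ)) (F^[k] p) := by
      unfold visitFreq
      rcases Nat.eq_zero_or_pos N with h | h
      · subst h; simp
      · have : (N:ℝ) ≠ 0 := by positivity
        rw [div_mul_cancel₀ _ this]
    linarith
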